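/- Let k=(k_1,…,k_r) be a composition, let m be a positive integer, let α∈ℂ∖ℕ with ℜ(α)<1, and set n=|k|+1−dep(k). Then ∫_0^1 A(k;x)·log^m((1−x)/(1+x))/(x·((1−x)/(1+x))^α) dx = (−1)^m·m!·Σ_{|j|=m, dep(j)=n} B((←k^∨)_+; j)·T((←k^∨)_+ + j; 1−α), where the sum is over j∈ℕ_0^n with j_1+⋯+j_n=m. -/

import Mathlib

open scoped BigOperators
open MeasureTheory

/-- Multiple polylogarithm `Li_k(z) = Σ_{n₁>⋯>n_r>0} z^{n₁}/(n₁^{k₁}⋯n_r^{k_r})`. -/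
noncomputable def MPL (k : List ℕ) (z : ℝ) : ℝ :=
  if h : 0 < k.length then
    ∑' n : {n : Fin k.length → ℕ // StrictAnti n ∧ ∀ i, 0 < n i},
      z ^ (n.1 ⟨0, h⟩) / ∏ i, (n.1 i : ℝ) ^ k.get i
  else 1

/-- Level-two multiple polylogarithm
`A(k;x) = 2^r Σ_{n₁>⋯>n_r>0, n_j ≡ r+1-j (mod 2)} x^{n₁}/(n₁^{k₁}⋯n_r^{k_r})`. -/
noncomputable def AFn (k : List ℕ) (x : ℝ) : ℝ :=
  if h : 0 < k.length then
    2 ^ k.length *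
      ∑' n : {n : Fin k.length → ℕ //
          StrictAnti n ∧ (∀ i, 0 < n i) ∧ ∀ i, n i % 2 = (k.length - i.val) % 2},
        x ^ (n.1 ⟨0, h⟩) / ∏ i, (n.1 i : ℝ) ^ k.get i
  else 1

/-- Multiple zeta value `ζ(k) = Σ_{n₁>⋯>n_r>0} ∏ 1/n_i^{k_i}`. -/
noncomputable def MZV (k : List ℕ) : ℝ :=
  ∑' n : {n : Fin k.length → ℕ // StrictAnti n ∧ ∀ i, 0 < n i},
    ∏ i, 1 / (n.1 i : ℝ) ^ k.get i

/-- Multiple zeta star value `ζ⋆(k) = Σ_{n₁≥⋯≥n_r>0} ∏ 1/n_i^{k_i}`. -/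
noncomputable def MZSV (k : List ℕ) : ℝ :=
  ∑' n : {n : Fin k.length → ℕ // Antitone n ∧ ∀ i, 0 < n i},
    ∏ i, 1 / (n.1 i : ℝ) ^ k.get i

/-- Multiple T-value `T(k) = 2^r Σ_{n₁>⋯>n_r>0, n_j ≡ r+1-j (mod 2)} ∏ 1/n_i^{k_i}`. -/
noncomputable def MTV (k : List ℕ) : ℝ :=
  2 ^ k.length *
    ∑' n : {n : Fin k.length → ℕ //
        StrictAnti n ∧ (∀ i, 0 < n i) ∧ ∀ i, n i % 2 = (k.length - i.val) % 2},
      ∏ i, 1 / (n.1 i : ℝ) ^ k.get i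

/-- Hurwitz-type multiple zeta value `ζ(k;α) = Σ_{n₁>⋯>n_r>0} ∏ (n_i+α-1)^{-k_i}`. -/
noncomputable def HMZV (k : List ℕ) (α : ℂ) : ℂ :=
  ∑' n : {n : Fin k.length → ℕ // StrictAnti n ∧ ∀ i, 0 < n i},
    ∏ i, ((n.1 i : ℂ) + α - 1) ^ (-(k.get i : ℤ))

/-- Hurwitz-type multiple zeta star value `ζ⋆(k;α) = Σ_{n₁≥⋯≥n_r>0} ∏ (n_i+α-1)^{-k_i}`. -/
noncomputable def HMZSV (k : List ℕ) (α : ℂ) : ℂ :=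
  ∑' n : {n : Fin k.length → ℕ // Antitone n ∧ ∀ i, 0 < n i},
    ∏ i, ((n.1 i : ℂ) + α - 1) ^ (-(k.get i : ℤ))

/-- Hurwitz-type multiple T-value
`T(k;α) = Σ_{m₁>⋯>m_r>0} 2^r ∏_i (2m_i - r - 2 + i + α)^{-k_i}` (1-indexed `i`). -/
noncomputable def HMTV (k : List ℕ) (α : ℂ) : ℂ :=
  ∑' n : {n : Fin k.length → ℕ // StrictAnti n ∧ ∀ i, 0 < n i},
    2 ^ k.length *
      ∏ i, (2 * (n.1 i : ℂ) - (k.length : ℂ) - 1 + (i.val : ℂ) + α) ^ (-(k.get i : ℤ))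

/-- The boolean word (sequence of bits between consecutive units) of a composition. -/
def toWord : List ℕ → List Bool
  | [] => []
  | [a] => List.replicate (a - 1) false
  | a :: b :: rest => List.replicate (a - 1) false ++ true :: toWord (b :: rest)

/-- The composition corresponding to a boolean word. -/
def fromWord : List Bool → List ℕ
  | [] => [1]
  | false :: w =>
    match fromWord w with
    | [] => [1]
    | a :: t => (a + 1) :: t
  | true :: w => 1 :: fromWord w

/-- Hoffman dual of a composition: swap commas and plus signs in
`k = (1+⋯+1, …, 1+⋯+1)`. -/
def HDual (k : List ℕ) : List ℕ := fromWord ((toWord k).map fun b => !b)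

/-- `k₊ = (k₁+1, k₂, …, k_r)`. -/
def plusOne : List ℕ → List ℕ
  | [] => []
  | a :: t => (a + 1) :: t

/-- `Refines l k` means the composition `k` can be obtained from `l`
by combining some consecutive parts of `l`, i.e. `l ⪰ k`. -/
inductive Refines : List ℕ → List ℕ → Prop
  | nil : Refines [] []
  | cons (b l k : List ℕ) : b ≠ [] → Refines l k → Refines (b ++ l) (b.sum :: k)

/-- Arakawa–Kaneko zeta function `ξ(s;k) = (1/Γ(s)) ∫_0^∞ t^{s-1}/(e^t-1) Li_k(1-e^{-t}) dt`. -/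
noncomputable def xiAK (s : ℂ) (k : List ℕ) : ℂ :=
  (1 / Complex.Gamma s) *
    ∫ t in Set.Ioi (0 : ℝ),
      (t : ℂ) ^ (s - 1) / ((Real.exp t : ℂ) - 1) * (MPL k (1 - Real.exp (-t)) : ℂ)

/-- Kaneko–Tsumura η-function `η(s;k) = (1/Γ(s)) ∫_0^∞ t^{s-1}/(1-e^t) Li_k(1-e^{t}) dt`. -/
noncomputable def etaKT (s : ℂ) (k : List ℕ) : ℂ :=
  (1 / Complex.Gamma s) *
    ∫ t in Set.Ioi (0 : ℝ),
      (t : ℂ) ^ (s - 1) / (1 - (Real.exp t : ℂ)) * (MPL k (1 - Real.exp t) : ℂ)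

/-- Kaneko–Tsumura ψ-function `ψ(s;k) = (1/Γ(s)) ∫_0^∞ t^{s-1} A(k; tanh(t/2))/sinh(t) dt`. -/
noncomputable def psiKT (s : ℂ) (k : List ℕ) : ℂ :=
  (1 / Complex.Gamma s) *
    ∫ t in Set.Ioi (0 : ℝ),
      (t : ℂ) ^ (s - 1) * ((AFn k (Real.tanh (t / 2)) / Real.sinh t : ℝ) : ℂ)

/-- Riemann zeta value `ζ(a) = Σ_{n>0} 1/n^a`. -/
noncomputable def zeta1 (a : ℕ) : ℝ := ∑' n : {n : ℕ // 0 < n}, 1 / (n.1 : ℝ) ^ a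

/-- Double zeta value `ζ(a,b) = Σ_{n₁>n₂>0} 1/(n₁^a n₂^b)`. -/
noncomputable def zeta2 (a b : ℕ) : ℝ :=
  ∑' p : {p : ℕ × ℕ // p.2 < p.1 ∧ 0 < p.2}, 1 / ((p.1.1 : ℝ) ^ a * (p.1.2 : ℝ) ^ b)

/-- Single T-value `T(a) = 2 Σ_{n>0 odd} 1/n^a`. -/
noncomputable def T1 (a : ℕ) : ℝ := 2 * ∑' n : {n : ℕ // 0 < n ∧ n % 2 = 1}, 1 / (n.1 : ℝ) ^ a

/-- Double T-value `T(a,b) = 4 Σ_{n₁>n₂>0, n₁ even, n₂ odd} 1/(n₁^a n₂^b)`. -/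
noncomputable def T2 (a b : ℕ) : ℝ :=
  4 * ∑' p : {p : ℕ × ℕ // p.2 < p.1 ∧ 0 < p.2 ∧ p.1 % 2 = 0 ∧ p.2 % 2 = 1},
    1 / ((p.1.1 : ℝ) ^ a * (p.1.2 : ℝ) ^ b)

/-!
`A(k; x)` is an iterated integral of the forms `dt/t` and `2dt/(1 - t²)`. The involution
`x ↦ (1 - x)/(1 + x)` reverses `(0, 1)` and exchanges the two forms, so for real `a < 1` the
integral of `A(k; x) ((1 - x)/(1 + x))^(-a) dx/x` is again an iterated integral, along the reversed
word with its letters exchanged, which is the word of `(←k^∨)₊`; expanding it in a series gives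
`T((←k^∨)₊; 1 - a)`. In other words, this T-value is the moment generating function of
`log ((1 + x)/(1 - x))` under the measure `A(k; x) dx/x`. Both sides continue analytically to the
half-plane `re z < 1`, and the theorem compares their `m`-th derivatives: on the left each
derivative brings down a factor `-log ((1 - x)/(1 + x))`, on the right the Leibniz rule
distributes the `m` derivatives over the factors of each summand.
-/

open Set ENNReal Filter Topology

/-- The involution `x ↦ (1 - x) / (1 + x)` of the unit interval. -/
noncomputable def cayley (x : ℝ) : ℝ := (1 - x) / (1 + x)

section Cayley

variable {x : ℝ}

lemma measurable_cayley : Measurable cayley := by unfold cayley; fun_prop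

lemma cayley_zero : cayley 0 = 1 := by norm_num [cayley]

lemma cayley_pos (hx : x ∈ Ioo (0 : ℝ) 1) : 0 < cayley x :=
  div_pos (by linarith [hx.2]) (by linarith [hx.1])

lemma cayley_cayley (hx : -1 < x) : cayley (cayley x) = x := by
  have hx' : 1 + x ≠ 0 := by linarith
  unfold cayley
  field_simp
  ring

lemma hasDerivAt_cayley (hx : -1 < x) : HasDerivAt cayley (-2 / (1 + x) ^ 2) x := by
  have h := ((hasDerivAt_id x).const_sub 1).div ((hasDerivAt_id x).const_add 1)
    (show 1 + id x ≠ 0 by simp only [id]; linarith)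
  refine h.congr_deriv ?_
  simp only [id]
  ring

lemma injOn_cayley : InjOn cayley (Ioi (-1)) := fun x hx y hy hxy => by
  rw [← cayley_cayley hx, hxy, cayley_cayley hy]

lemma cayley_image_Ioo (hx : x ∈ Ico (0 : ℝ) 1) : cayley '' Ioo x 1 = Ioo 0 (cayley x) := by
  have cayley_lt {s t : ℝ} (hs : -1 < s) (hst : s < t) : cayley t < cayley s := by
    rw [cayley, cayley, div_lt_div_iff₀ (by linarith) (by linarith)]
    nlinarith
  have cayley_one : cayley 1 = 0 := by norm_num [cayley]
  have hx' : -1 < x := by linarith [hx.1]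
  refine Subset.antisymm ?_ fun s hs => ⟨cayley s, ⟨?_, ?_⟩, cayley_cayley (by linarith [hs.1])⟩
  · rintro _ ⟨t, ht, rfl⟩
    exact ⟨cayley_one ▸ cayley_lt (by linarith [ht.1]) ht.2, cayley_lt hx' ht.1⟩
  · rw [← cayley_cayley hx']
    exact cayley_lt (by linarith [hs.1]) hs.2
  · rw [← cayley_zero]
    exact cayley_lt (by norm_num) hs.1

end Cayley

/-- The two differential forms of level two, as densities on `(0, 1)`: `dt/t` for the letter
`false` and `2dt/(1 - t²)` for the letter `true`. -/
noncomputable def levelTwoForm : Bool → ℝ → ℝ≥0∞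
  | false, t => .ofReal (1 / t)
  | true, t => .ofReal (2 / (1 - t ^ 2))

/-- Integration of `f` from `0` to `x` against one of the two level-two forms. -/
noncomputable def formIntegral (b : Bool) (f : ℝ → ℝ≥0∞) (x : ℝ) : ℝ≥0∞ :=
  ∫⁻ t in Ioo 0 x, levelTwoForm b t * f t

/-- The iterated integral of `f` along a word in the two level-two forms; the first letter is
integrated last. -/
noncomputable def iteratedIntegral (w : List Bool) (f : ℝ → ℝ≥0∞) : ℝ → ℝ≥0∞ :=
  w.foldr formIntegral f

section Duality

variable {b c : Bool} {x : ℝ} {f g : ℝ → ℝ≥0∞}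

lemma measurable_levelTwoForm : Measurable (levelTwoForm b) := by
  cases b <;> (unfold levelTwoForm; fun_prop)

lemma measurable_formIntegral : Measurable (formIntegral b f) :=
  Monotone.measurable fun _ _ hxy => lintegral_mono_set (Ioo_subset_Ioo_right hxy)

lemma measurable_iteratedIntegral (hf : Measurable f) :
    ∀ w, Measurable (iteratedIntegral w f)
  | [] => hf
  | _ :: _ => measurable_formIntegral

lemma formIntegral_congr (h : EqOn f g (Ioo 0 x)) : formIntegral b f x = formIntegral b g x :=
  setLIntegral_congr_fun measurableSet_Ioo fun t ht => by simp only [h ht]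

lemma iteratedIntegral_append (v w : List Bool) :
    iteratedIntegral (v ++ w) f = iteratedIntegral v (iteratedIntegral w f) :=
  List.foldr_append

lemma abs_deriv_cayley_mul_levelTwoForm (hx : x ∈ Ioo (0 : ℝ) 1) :
    ENNReal.ofReal |-2 / (1 + x) ^ 2| * levelTwoForm b (cayley x) = levelTwoForm (!b) x := by
  obtain ⟨h₀, h₁⟩ := hx
  have h_abs : |-2 / (1 + x) ^ 2| = 2 / (1 + x) ^ 2 := by
    rw [abs_div, abs_of_pos (by positivity : 0 < (1 + x) ^ 2)]
    norm_num
  rw [h_abs]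
  have h₂ : 1 - x ≠ 0 := by linarith
  have h₃ : 1 - x ^ 2 ≠ 0 := by nlinarith
  cases b <;>
    simp only [levelTwoForm, cayley, Bool.not_false, Bool.not_true] <;>
    rw [← ENNReal.ofReal_mul (by positivity)] <;> congr 1
  · field_simp
    ring
  · have h₄ : 1 - ((1 - x) / (1 + x)) ^ 2 = 4 * x / (1 + x) ^ 2 := by field_simp; ring
    rw [h₄]
    field_simp
    norm_num

lemma formIntegral_cayley (hx : x ∈ Ico (0 : ℝ) 1) :
    formIntegral b f (cayley x) = ∫⁻ t in Ioo x 1, levelTwoForm (!b) t * f (cayley t) := by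
  have h_sub : ∀ t ∈ Ioo x 1, t ∈ Ioo (0 : ℝ) 1 := fun t ht => ⟨hx.1.trans_lt ht.1, ht.2⟩
  rw [formIntegral, ← cayley_image_Ioo hx,
    lintegral_image_eq_lintegral_abs_deriv_mul measurableSet_Ioo
      (fun t ht => (hasDerivAt_cayley (by linarith [(h_sub t ht).1])).hasDerivWithinAt)
      (injOn_cayley.mono fun t ht => by simp only [mem_Ioi]; linarith [(h_sub t ht).1])]
  refine setLIntegral_congr_fun measurableSet_Ioo fun t ht => ?_
  simp only [← mul_assoc, abs_deriv_cayley_mul_levelTwoForm (h_sub t ht)]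

lemma setLIntegral_Ioo_swap (hf : Measurable f) (hg : Measurable g) (a b : ℝ) :
    ∫⁻ x in Ioo a b, f x * ∫⁻ t in Ioo a x, g t = ∫⁻ t in Ioo a b, g t * ∫⁻ x in Ioo t b, f x := by
  let F : ℝ → ℝ → ℝ≥0∞ := fun x t =>
    {p : ℝ × ℝ | p.2 < p.1}.indicator (fun p => f p.1 * g p.2) (x, t)
  have hF : Measurable (Function.uncurry F) :=
    ((hf.comp measurable_fst).mul (hg.comp measurable_snd)).indicator
      (measurableSet_lt measurable_snd measurable_fst)
  have h_left : ∀ x ∈ Ioo a b, ∫⁻ t in Ioo a b, F x t = f x * ∫⁻ t in Ioo a x, g t := by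
    intro x hx
    have h_inter : Ioo a x = Iio x ∩ Ioo a b := by
      rw [inter_comm, Ioo_inter_Iio, min_eq_right hx.2.le]
    have h_ind : F x = (Iio x).indicator fun t => f x * g t := rfl
    rw [h_ind, setLIntegral_indicator measurableSet_Iio, ← h_inter, lintegral_const_mul _ hg]
  have h_right : ∀ t ∈ Ioo a b, ∫⁻ x in Ioo a b, F x t = g t * ∫⁻ x in Ioo t b, f x := by
    intro t ht
    have h_inter : Ioo t b = Ioi t ∩ Ioo a b := by
      rw [inter_comm, Ioo_inter_Ioi, max_eq_right ht.1.le]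
    have h_ind : (fun x => F x t) = (Ioi t).indicator fun x => f x * g t := rfl
    rw [h_ind, setLIntegral_indicator measurableSet_Ioi, ← h_inter, lintegral_mul_const _ hf,
      mul_comm]
  rw [← setLIntegral_congr_fun measurableSet_Ioo h_left,
    ← setLIntegral_congr_fun measurableSet_Ioo h_right]
  exact lintegral_lintegral_swap hF.aemeasurable

lemma lintegral_formIntegral_mul_cayley (hf : Measurable f) (hg : Measurable g) :
    ∫⁻ x in Ioo 0 1, levelTwoForm b x * (formIntegral c f x * g (cayley x)) =
      ∫⁻ t in Ioo 0 1, levelTwoForm c t * (f t * formIntegral (!b) g (cayley t)) := by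
  have h_swap := setLIntegral_Ioo_swap
    (measurable_levelTwoForm (b := b) |>.mul (hg.comp measurable_cayley))
    (measurable_levelTwoForm (b := c) |>.mul hf) 0 1
  calc
    _ = ∫⁻ x in Ioo 0 1, levelTwoForm b x * g (cayley x) * formIntegral c f x :=
      lintegral_congr fun x => by ring
    _ = ∫⁻ t in Ioo 0 1, levelTwoForm c t * f t *
          ∫⁻ x in Ioo t 1, levelTwoForm b x * g (cayley x) := h_swap
    _ = _ := setLIntegral_congr_fun measurableSet_Ioo fun t ht => by
      simp only [formIntegral_cayley ⟨ht.1.le, ht.2⟩, Bool.not_not, mul_assoc]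

/-- Duality of iterated integrals: moving the forms one at a time from one factor to the other
by `lintegral_formIntegral_mul_cayley` reverses the word and exchanges its letters. -/
theorem lintegral_iteratedIntegral_mul_cayley (hg : Measurable g) (b : Bool) (w : List Bool) :
    ∫⁻ x in Ioo 0 1, levelTwoForm b x * (iteratedIntegral w 1 x * g (cayley x)) =
      iteratedIntegral ((b :: w).map not).reverse g 1 := by
  induction w generalizing b g with
  | nil =>
    have h := formIntegral_cayley (b := !b) (f := g) (left_mem_Ico.2 zero_lt_one)
    simpa only [cayley_zero, Bool.not_not, iteratedIntegral, List.map_cons, List.map_nil,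
      List.reverse_singleton, List.foldr_cons, List.foldr_nil, Pi.one_apply, one_mul]
      using h.symm
  | cons c w ih =>
    rw [List.map_cons, List.reverse_cons, iteratedIntegral_append]
    exact (lintegral_formIntegral_mul_cayley
      (measurable_iteratedIntegral measurable_one w) hg).trans (ih measurable_formIntegral c)

end Duality

section Powers

variable {b : Bool} {x s : ℝ}

lemma formIntegral_mul_const (f : ℝ → ℝ≥0∞) {c : ℝ≥0∞} (hc : c ≠ ∞) :
    formIntegral b (fun t => f t * c) x = formIntegral b f x * c := by
  simp only [formIntegral, ← mul_assoc, lintegral_mul_const' _ _ hc]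

lemma formIntegral_tsum {ι : Type*} [Countable ι] {f : ι → ℝ → ℝ≥0∞} (hf : ∀ i, Measurable (f i)) :
    formIntegral b (fun t => ∑' i, f i t) x = ∑' i, formIntegral b (f i) x := by
  simp only [formIntegral, ← ENNReal.tsum_mul_left]
  exact lintegral_tsum fun i => (measurable_levelTwoForm.mul (hf i)).aemeasurable

lemma formIntegral_false_rpow (hs : 0 < s) (hx : 0 ≤ x) :
    formIntegral false (fun t => .ofReal (t ^ s)) x = .ofReal (x ^ s / s) := by
  have h_form : ∀ t ∈ Ioo 0 x, levelTwoForm false t * .ofReal (t ^ s) =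
      ENNReal.ofReal (t ^ (s - 1)) := fun t ht => by
    rw [levelTwoForm, ← ENNReal.ofReal_mul (one_div_pos.2 ht.1).le, Real.rpow_sub_one ht.1.ne',
      one_div_mul_eq_div]
  have h_int : IntegrableOn (fun t : ℝ => t ^ (s - 1)) (Ioc 0 x) :=
    (intervalIntegrable_iff_integrableOn_Ioc_of_le hx).1
      (intervalIntegral.intervalIntegrable_rpow' (by linarith))
  rw [formIntegral, setLIntegral_congr_fun measurableSet_Ioo h_form,
    setLIntegral_congr Ioo_ae_eq_Ioc, ← ofReal_integral_eq_lintegral_ofReal h_int,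
    ← intervalIntegral.integral_of_le hx, integral_rpow (Or.inl (by linarith))]
  · simp only [sub_add_cancel, Real.zero_rpow hs.ne', sub_zero]
  · filter_upwards [ae_restrict_mem measurableSet_Ioc] with t ht
    exact Real.rpow_nonneg ht.1.le _

lemma levelTwoForm_true_mul_rpow {t : ℝ} (ht : t ∈ Ioo (0 : ℝ) 1) (s : ℝ) :
    levelTwoForm true t * .ofReal (t ^ s) =
      levelTwoForm false t * ∑' l : ℕ, .ofReal (t ^ (s + 1 + 2 * l)) * 2 := by
  have h_term (l : ℕ) : 1 / t * (t ^ (s + 1 + 2 * l) * 2) = 2 * t ^ s * (t ^ 2) ^ l := by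
    rw [add_right_comm, Real.rpow_add_one ht.1.ne', Real.rpow_add ht.1, Real.rpow_mul ht.1.le,
      Real.rpow_natCast, Real.rpow_two]
    field_simp [ht.1.ne']
  have h_sq : t ^ 2 < 1 := by nlinarith [ht.1, ht.2]
  have h_geom : HasSum (fun l : ℕ => 1 / t * (t ^ (s + 1 + 2 * l) * 2))
      (2 / (1 - t ^ 2) * t ^ s) := by
    simp only [h_term]
    rw [div_mul_eq_mul_div, div_eq_mul_inv]
    exact (hasSum_geometric_of_lt_one (sq_nonneg t) h_sq).mul_left (2 * t ^ s)
  have h_nonneg (l : ℕ) : 0 ≤ 1 / t * (t ^ (s + 1 + 2 * l) * 2) := by have := ht.1; positivity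
  simp only [levelTwoForm]
  rw [← ENNReal.ofReal_mul (div_nonneg zero_le_two (by linarith)), ← h_geom.tsum_eq,
    ENNReal.ofReal_tsum_of_nonneg h_nonneg h_geom.summable, ← ENNReal.tsum_mul_left]
  refine tsum_congr fun l => ?_
  rw [ENNReal.ofReal_mul (one_div_pos.2 ht.1).le, ENNReal.ofReal_mul' zero_le_two,
    ENNReal.ofReal_ofNat]

lemma formIntegral_true_rpow (hs : -1 < s) (hx : x ∈ Ioc (0 : ℝ) 1) :
    formIntegral true (fun t => .ofReal (t ^ s)) x =
      ∑' l : ℕ, .ofReal (x ^ (s + 1 + 2 * l)) * .ofReal (2 / (s + 1 + 2 * l)) := by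
  have h_term (l : ℕ) : formIntegral false (fun t => .ofReal (t ^ (s + 1 + 2 * l)) * 2) x =
      .ofReal (x ^ (s + 1 + 2 * l)) * .ofReal (2 / (s + 1 + 2 * l)) := by
    have hl : 0 < s + 1 + 2 * l := by positivity [show 0 < s + 1 by linarith]
    rw [formIntegral_mul_const _ ofNat_ne_top, formIntegral_false_rpow hl hx.1.le,
      ← ENNReal.ofReal_ofNat 2, ← ENNReal.ofReal_mul' zero_le_two,
      ← ENNReal.ofReal_mul (Real.rpow_nonneg hx.1.le _)]
    congr 1
    ring
  rw [← tsum_congr h_term, ← formIntegral_tsum fun l => by fun_prop]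
  exact setLIntegral_congr_fun measurableSet_Ioo fun t ht =>
    levelTwoForm_true_mul_rpow ⟨ht.1, ht.2.trans_le hx.2⟩ s

end Powers

/-- The index set of the level-two sums of depth `r`: chains `n₁ > ⋯ > n_r > 0` in which `n_r` is
odd and the parities alternate. -/
abbrev ParityChain (r : ℕ) : Type :=
  {n : Fin r → ℕ // StrictAnti n ∧ (∀ i, 0 < n i) ∧ ∀ i, n i % 2 = (r - i.val) % 2}

namespace ParityChain

variable {r : ℕ}

/-- The largest entry of a parity chain; the empty chain has head `0`, so that prepending an entry
to any chain means adding a positive odd number to its head. -/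
def head (n : ParityChain r) : ℕ := if h : 0 < r then n.1 ⟨0, h⟩ else 0

lemma head_succ (n : ParityChain (r + 1)) : n.head = n.1 0 := dif_pos r.succ_pos

lemma le_head (n : ParityChain r) (i : Fin r) : n.1 i ≤ n.head := by
  rw [head, dif_pos i.pos]
  exact n.2.1.antitone (Nat.zero_le i.val)

lemma head_mod_two (n : ParityChain r) : n.head % 2 = r % 2 := by
  cases r with
  | zero => rfl
  | succ r => simpa only [head_succ, Fin.val_zero, Nat.sub_zero] using n.2.2.2 0

/-- The chain obtained by prepending `n.head + 1 + 2 * l`. -/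
def cons (n : ParityChain r) (l : ℕ) : ParityChain (r + 1) :=
  ⟨Fin.cons (n.head + 1 + 2 * l) n.1, by
    refine ⟨fun i j hij => ?_, Fin.cases (by simp) n.2.2.1, Fin.cases ?_ fun i => ?_⟩
    · obtain ⟨j, rfl⟩ := Fin.exists_succ_eq.2 (Fin.ne_zero_of_lt hij)
      cases i using Fin.cases with
      | zero => simpa using (n.le_head j).trans_lt (by omega)
      | succ i => exact n.2.1 (Fin.succ_lt_succ_iff.1 hij)
    · have := n.head_mod_two
      simp only [Fin.cons_zero, Fin.val_zero]
      omega
    · simpa using n.2.2.2 i⟩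

lemma head_cons (n : ParityChain r) (l : ℕ) : (n.cons l).head = n.head + 1 + 2 * l :=
  head_succ _

/-- The chain without its largest entry. -/
def tail (n : ParityChain (r + 1)) : ParityChain r :=
  ⟨Fin.tail n.1, n.2.1.comp_strictMono (Fin.strictMono_succ), fun i => n.2.2.1 i.succ, fun i => by
    simpa [Fin.tail] using n.2.2.2 i.succ⟩

lemma head_tail_lt (n : ParityChain (r + 1)) : n.tail.head < n.1 0 := by
  cases r with
  | zero => exact n.2.2.1 0
  | succ r => exact n.tail.head_succ ▸ n.2.1 Fin.zero_lt_one

/-- A parity chain of depth `r + 1` is a chain of depth `r` together with the half `l` of the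
excess of its largest entry over the smallest admissible value. -/
def consEquiv (r : ℕ) : ParityChain r × ℕ ≃ ParityChain (r + 1) where
  toFun p := p.1.cons p.2
  invFun n := (n.tail, (n.1 0 - n.tail.head) / 2)
  left_inv p := Prod.ext rfl <| by
    change (p.1.head + 1 + 2 * p.2 - p.1.head) / 2 = p.2
    omega
  right_inv n := Subtype.ext <| by
    have h_parity := n.head_mod_two
    have h_parity_tail := n.tail.head_mod_two
    have h_lt := n.head_tail_lt
    rw [head_succ] at h_parity
    refine funext (Fin.cases ?_ fun i => rfl)
    change n.tail.head + 1 + 2 * ((n.1 0 - n.tail.head) / 2) = n.1 0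
    omega

/-- The summand `∏ 2 / (nᵢ - z) ^ qᵢ` of a level-two Hurwitz sum. -/
def term {𝕜 : Type*} [Field 𝕜] (n : ParityChain r) (q : Fin r → ℕ) (z : 𝕜) : 𝕜 :=
  ∏ i, 2 / ((n.1 i : 𝕜) - z) ^ q i

variable {a : ℝ} (n : ParityChain r) (q : Fin r → ℕ)

lemma one_le_cast (i : Fin r) : (1 : ℝ) ≤ n.1 i := mod_cast n.2.2.1 i

lemma sub_pos (ha : a < 1) (i : Fin r) : 0 < (n.1 i : ℝ) - a := by linarith [n.one_le_cast i]

lemma term_nonneg (ha : a < 1) : 0 ≤ n.term q a :=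
  Finset.prod_nonneg fun i _ => div_nonneg zero_le_two (pow_nonneg (n.sub_pos ha i).le _)

end ParityChain

/-- The level-two polylogarithm shifted by `a`, `∑ y ^ (n₁ - a) ∏ 2 / (nᵢ - a) ^ pᵢ` over parity
chains; with values in `[0, ∞]`, so that sums and integrals commute unconditionally. -/
noncomputable def parityChainSum (p : List ℕ) (a y : ℝ) : ℝ≥0∞ :=
  ∑' n : ParityChain p.length, .ofReal (y ^ ((n.head : ℝ) - a)) * .ofReal (n.term p.get a)

section ParityChainSum

variable {a y : ℝ} {p : List ℕ}

lemma parityChainSum_nil : parityChainSum [] a y = .ofReal (y ^ (-a)) := by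
  have h_nil : StrictAnti (![] : Fin 0 → ℕ) := fun i => i.elim0
  let e : Unique (ParityChain 0) :=
    ⟨⟨⟨![], h_nil, fun i => i.elim0, fun i => i.elim0⟩⟩,
      fun n => Subtype.ext (Subsingleton.elim _ _)⟩
  refine (tsum_eq_single (e.default) fun n hn => (hn (e.uniq n)).elim).trans ?_
  simp [ParityChain.head, ParityChain.term]

lemma formIntegral_parityChainSum_term (b : Bool) (x : ℝ) :
    formIntegral b (parityChainSum p a) x = ∑' n : ParityChain p.length,
      formIntegral b (fun y => .ofReal (y ^ ((n.head : ℝ) - a))) x * .ofReal (n.term p.get a) := by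
  unfold parityChainSum
  rw [formIntegral_tsum fun n => by fun_prop]
  exact tsum_congr fun n => formIntegral_mul_const _ ofReal_ne_top

lemma formIntegral_true_parityChainSum (ha : a < 1) (hy : y ∈ Ioc (0 : ℝ) 1) :
    formIntegral true (parityChainSum p a) y = parityChainSum (1 :: p) a y := by
  rw [formIntegral_parityChainSum_term, parityChainSum]
  change _ = ∑' n : ParityChain (p.length + 1), _
  rw [← (ParityChain.consEquiv p.length).tsum_eq, ENNReal.tsum_prod']
  refine tsum_congr fun n => ?_
  have h_head : -1 < (n.head : ℝ) - a := by linarith [n.head.cast_nonneg (α := ℝ)]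
  rw [formIntegral_true_rpow h_head hy, ← ENNReal.tsum_mul_right]
  refine tsum_congr fun l => ?_
  have h_cons : (((n.cons l).head : ℝ) - a) = (n.head : ℝ) - a + 1 + 2 * l := by
    rw [ParityChain.head_cons]
    push_cast
    ring
  have h_term : (n.cons l).term (1 :: p).get a =
      2 / ((n.head : ℝ) - a + 1 + 2 * l) * n.term p.get a := by
    rw [← h_cons, ParityChain.head_succ, ← pow_one (_ - a)]
    exact Fin.prod_univ_succ _
  change _ = ENNReal.ofReal (y ^ (((n.cons l).head : ℝ) - a)) * .ofReal ((n.cons l).term _ a)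
  rw [h_cons, h_term, ENNReal.ofReal_mul' (n.term_nonneg _ ha), mul_assoc]

lemma formIntegral_false_parityChainSum (hp : p ≠ []) (ha : a < 1) (hy : 0 ≤ y) :
    formIntegral false (parityChainSum p a) y = parityChainSum (plusOne p) a y := by
  obtain ⟨b, t, rfl⟩ := List.exists_cons_of_ne_nil hp
  rw [formIntegral_parityChainSum_term, parityChainSum]
  refine tsum_congr fun (n : ParityChain (t.length + 1)) => ?_
  have h_head : 0 < (n.head : ℝ) - a := n.head_succ ▸ n.sub_pos ha 0
  have h_term : n.term (plusOne (b :: t)).get a = n.term (b :: t).get a / ((n.head : ℝ) - a) := by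
    refine (Fin.prod_univ_succ _).trans ?_
    rw [ParityChain.term, Fin.prod_univ_succ, ← n.head_succ]
    change 2 / _ ^ (b + 1) * _ = 2 / _ ^ b * _ / _
    rw [pow_succ, ← div_div, div_mul_eq_mul_div]
    rfl
  change _ = _ * ENNReal.ofReal (n.term _ a)
  rw [formIntegral_false_rpow h_head hy, h_term, ← ENNReal.ofReal_mul (by positivity),
    ← ENNReal.ofReal_mul (by positivity), div_mul_eq_mul_div, mul_div_assoc]
  rfl

end ParityChainSum

section Words

variable {k l : List ℕ}

lemma toWord_append (hk : k ≠ []) (hl : l ≠ []) :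
    toWord (k ++ l) = toWord k ++ true :: toWord l := by
  induction k using toWord.induct with
  | case1 => exact absurd rfl hk
  | case2 a =>
    obtain ⟨b, t, rfl⟩ := List.exists_cons_of_ne_nil hl
    rfl
  | case3 a b t ih =>
    simp only [List.cons_append] at ih ⊢
    simp only [toWord, ih (List.cons_ne_nil b t), List.append_assoc, List.cons_append]

lemma toWord_reverse (k : List ℕ) : toWord k.reverse = (toWord k).reverse := by
  induction k using toWord.induct with
  | case1 => rfl
  | case2 a => simp only [toWord, List.reverse_singleton, List.reverse_replicate]
  | case3 a b t ih =>
    rw [List.reverse_cons, toWord_append (by simp) (List.cons_ne_nil a []), ih]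
    simp only [toWord, List.reverse_append, List.reverse_cons, List.reverse_replicate,
      List.append_assoc, List.singleton_append]

lemma count_false_toWord (hk : k ≠ []) (hpos : ∀ a ∈ k, 0 < a) :
    (toWord k).count false + k.length = k.sum := by
  induction k using toWord.induct with
  | case1 => exact absurd rfl hk
  | case2 a =>
    have ha : 0 < a := hpos a List.mem_cons_self
    simp only [toWord, List.count_replicate_self, List.length_singleton, List.sum_singleton]
    omega
  | case3 a b t ih =>
    have ha : 0 < a := hpos a List.mem_cons_self
    have := ih (List.cons_ne_nil b t) fun c hc => hpos c (List.mem_cons_of_mem a hc)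
    rw [toWord, List.count_append, List.count_replicate_self, List.count_cons_of_ne (by simp),
      List.length_cons, List.sum_cons]
    omega

lemma fromWord_ne_nil (w : List Bool) : fromWord w ≠ [] := by
  unfold fromWord
  split <;> try split
  all_goals exact List.cons_ne_nil _ _

lemma fromWord_false_cons (w : List Bool) : fromWord (false :: w) = plusOne (fromWord w) := by
  obtain ⟨a, t, h⟩ := List.exists_cons_of_ne_nil (fromWord_ne_nil w)
  simp only [fromWord, h, plusOne]

lemma length_plusOne (p : List ℕ) : (plusOne p).length = p.length := by
  cases p <;> rfl

lemma pos_of_mem_plusOne {p : List ℕ} (hp : ∀ a ∈ p, 0 < a) : ∀ a ∈ plusOne p, 0 < a := by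
  cases p with
  | nil => exact hp
  | cons b t => exact List.forall_mem_cons.2 ⟨b.succ_pos, (List.forall_mem_cons.1 hp).2⟩

lemma pos_of_mem_fromWord (w : List Bool) : ∀ a ∈ fromWord w, 0 < a := by
  induction w with
  | nil => simp [fromWord]
  | cons b w ih =>
    cases b
    · exact fromWord_false_cons w ▸ pos_of_mem_plusOne ih
    · exact List.forall_mem_cons.2 ⟨one_pos, ih⟩

lemma length_fromWord (w : List Bool) : (fromWord w).length = w.count true + 1 := by
  induction w with
  | nil => rfl
  | cons b w ih =>
    cases b
    · rw [fromWord_false_cons, length_plusOne, ih, List.count_cons_of_ne (by simp)]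
    · rw [fromWord, List.length_cons, ih, List.count_cons_self]

lemma fromWord_replicate_false_append {w : List Bool} {a : ℕ} {t : List ℕ}
    (h : fromWord w = a :: t) (n : ℕ) :
    fromWord (List.replicate n false ++ w) = (a + n) :: t := by
  induction n with
  | zero => exact h
  | succ n ih => rw [List.replicate_succ, List.cons_append, fromWord_false_cons, ih]; rfl

lemma fromWord_toWord (hk : k ≠ []) (hpos : ∀ a ∈ k, 0 < a) : fromWord (toWord k) = k := by
  induction k using toWord.induct with
  | case1 => exact absurd rfl hk
  | case2 a =>
    rw [toWord, ← List.append_nil (List.replicate _ _), fromWord_replicate_false_append rfl,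
      Nat.add_sub_cancel' (hpos a List.mem_cons_self)]
  | case3 a b t ih =>
    rw [toWord, fromWord_replicate_false_append rfl,
      Nat.add_sub_cancel' (hpos a List.mem_cons_self),
      ih (List.cons_ne_nil b t) fun c hc => hpos c (List.mem_cons_of_mem a hc)]

lemma count_not (w : List Bool) (b : Bool) : (w.map not).count b = w.count (!b) := by
  simpa only [Bool.not_not] using List.count_map_of_injective w not Bool.not_injective (!b)

lemma length_plusOne_HDual_reverse (hk : k ≠ []) (hpos : ∀ a ∈ k, 0 < a) :
    (plusOne (HDual k.reverse)).length = k.sum + 1 - k.length := by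
  have h_count : (toWord k.reverse).count false = (toWord k).count false := by
    rw [toWord_reverse, List.count_reverse]
  have := count_false_toWord hk hpos
  rw [length_plusOne, HDual, length_fromWord, count_not, Bool.not_true, h_count]
  omega

/-- The convergence condition on the exponents of a level-two sum: they are all positive, and the
exponent of the largest summation variable is at least two. -/
def IsAdmissible {r : ℕ} (q : Fin r → ℕ) : Prop := ∀ i, (if i.val = 0 then 2 else 1) ≤ q i

lemma isAdmissible_plusOne {p : List ℕ} (hp : ∀ a ∈ p, 0 < a) : IsAdmissible (plusOne p).get := by
  cases p with
  | nil => exact fun i => i.elim0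
  | cons b t =>
    obtain ⟨hb, ht⟩ := List.forall_mem_cons.1 hp
    exact Fin.cases (Nat.succ_le_succ hb) fun i => ht _ (t.get_mem i)

lemma isAdmissible_plusOne_HDual : IsAdmissible (plusOne (HDual k)).get :=
  isAdmissible_plusOne (pos_of_mem_fromWord _)

lemma IsAdmissible.add {r : ℕ} {q : Fin r → ℕ} (hq : IsAdmissible q) (j : Fin r → ℕ) :
    IsAdmissible (q + j) :=
  fun i => (hq i).trans (Nat.le_add_right _ _)

end Words

section IteratedIntegrals

variable {a x : ℝ} {k : List ℕ}

lemma iteratedIntegral_rpow (ha : a < 1) (w : List Bool) (hx : x ∈ Ioc (0 : ℝ) 1) :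
    iteratedIntegral (w ++ [true]) (fun y => .ofReal (y ^ (-a))) x =
      parityChainSum (fromWord w) a x := by
  induction w generalizing x with
  | nil =>
    simp only [← parityChainSum_nil]
    exact formIntegral_true_parityChainSum ha hx
  | cons b w ih =>
    have h_eqOn : EqOn (iteratedIntegral (w ++ [true]) fun y => .ofReal (y ^ (-a)))
        (parityChainSum (fromWord w) a) (Ioo 0 x) := fun t ht => ih ⟨ht.1, ht.2.le.trans hx.2⟩
    refine (formIntegral_congr h_eqOn).trans ?_
    cases b
    · rw [formIntegral_false_parityChainSum (fromWord_ne_nil w) ha hx.1.le, fromWord_false_cons]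
    · exact formIntegral_true_parityChainSum ha hx

/-- The function `A(k; x)` as an iterated integral, with values in `[0, ∞]`. -/
noncomputable def levelTwoPolylog (k : List ℕ) : ℝ → ℝ≥0∞ :=
  iteratedIntegral (toWord k ++ [true]) 1

lemma measurable_levelTwoPolylog : Measurable (levelTwoPolylog k) :=
  measurable_iteratedIntegral measurable_one _

lemma levelTwoPolylog_eq (hk : k ≠ []) (hpos : ∀ a ∈ k, 0 < a) (hx : x ∈ Ioc (0 : ℝ) 1) :
    levelTwoPolylog k x = parityChainSum k 0 x := by
  have h := iteratedIntegral_rpow zero_lt_one (toWord k) hx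
  simp only [fromWord_toWord hk hpos, neg_zero, Real.rpow_zero, ENNReal.ofReal_one] at h
  exact h

lemma toReal_levelTwoPolylog (hk : k ≠ []) (hpos : ∀ a ∈ k, 0 < a) (hx : x ∈ Ioc (0 : ℝ) 1) :
    (levelTwoPolylog k x).toReal = AFn k x := by
  have hk_length : 0 < k.length := List.length_pos_iff.2 hk
  rw [levelTwoPolylog_eq hk hpos hx, parityChainSum, ENNReal.tsum_toReal_eq fun n => by finiteness,
    AFn, dif_pos hk_length, ← tsum_mul_left]
  refine tsum_congr fun n => ?_
  rw [ENNReal.toReal_mul, ENNReal.toReal_ofReal (Real.rpow_nonneg hx.1.le _),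
    ENNReal.toReal_ofReal (n.term_nonneg _ zero_lt_one), ParityChain.term, ParityChain.head,
    dif_pos hk_length, sub_zero, Real.rpow_natCast]
  simp only [sub_zero, Finset.prod_div_distrib, Finset.prod_const, Finset.card_univ,
    Fintype.card_fin]
  ring

lemma lintegral_levelTwoPolylog_mul_cayley_rpow (ha : a < 1) :
    ∫⁻ x in Ioo 0 1, levelTwoForm false x * (levelTwoPolylog k x * .ofReal (cayley x ^ (-a))) =
      parityChainSum (plusOne (HDual k.reverse)) a 1 := by
  have h_word : ((false :: (toWord k ++ [true])).map not).reverse =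
      (false :: (toWord k.reverse).map not) ++ [true] := by
    simp [toWord_reverse]
  refine (lintegral_iteratedIntegral_mul_cayley (g := fun y => .ofReal (y ^ (-a)))
    (by fun_prop) false _).trans ?_
  rw [h_word, iteratedIntegral_rpow ha _ (right_mem_Ioc.2 zero_lt_one), fromWord_false_cons]
  rfl

end IteratedIntegrals

section Summability

lemma summable_prod_fin {α : Type*} {f : α → ℝ} (hf : Summable f) (hf₀ : 0 ≤ f) (r : ℕ) :
    Summable fun n : Fin r → α => ∏ i, f (n i) := by
  induction r with
  | zero => exact Summable.of_finite
  | succ r ih =>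
    rw [← (Fin.consEquiv fun _ => α).summable_iff]
    refine (hf.mul_of_nonneg ih hf₀ fun n => Finset.prod_nonneg fun i _ => hf₀ _).congr fun p => ?_
    exact (Fin.prod_univ_succ fun i => f ((Fin.consEquiv (fun _ => α) p) i)).symm

namespace ParityChain

variable {r : ℕ} {q : Fin r → ℕ} {c : ℝ}

/-- The largest entry dominates the geometric mean of all entries; this shares the surplus in its
exponent among all of them. -/
lemma prod_rpow_le_prod_pow (n : ParityChain r) (hq : IsAdmissible q) :
    ∏ i, (n.1 i : ℝ) ^ (1 + 1 / r : ℝ) ≤ ∏ i, (n.1 i : ℝ) ^ q i := by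
  cases r with
  | zero => simp
  | succ r =>
    have h_pos (i) : 0 < (n.1 i : ℝ) := one_pos.trans_le (n.one_le_cast i)
    have h_mean : ∏ i, (n.1 i : ℝ) ^ (1 / (r + 1 : ℕ) : ℝ) ≤ n.1 0 := calc
      _ ≤ ∏ _i : Fin (r + 1), (n.1 0 : ℝ) ^ (1 / (r + 1 : ℕ) : ℝ) := by
        gcongr with i
        exact_mod_cast n.head_succ ▸ n.le_head i
      _ = n.1 0 := by
        rw [Finset.prod_const, Finset.card_univ, Fintype.card_fin, one_div,
          Real.rpow_inv_natCast_pow (h_pos 0).le r.succ_ne_zero]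
    have h_head : (n.1 0 : ℝ) * n.1 0 ≤ n.1 0 ^ q 0 := by
      simpa only [sq] using pow_le_pow_right₀ (n.one_le_cast 0) (show 2 ≤ q 0 from hq 0)
    have h_tail (i : Fin r) : (n.1 i.succ : ℝ) ≤ n.1 i.succ ^ q i.succ := by
      simpa only [pow_one] using
        pow_le_pow_right₀ (n.one_le_cast i.succ) (show 1 ≤ q i.succ from hq i.succ)
    calc
      _ = (∏ i, (n.1 i : ℝ) ^ (1 / (r + 1 : ℕ) : ℝ)) * ∏ i, (n.1 i : ℝ) := by
        simp only [add_comm (1 : ℝ), Real.rpow_add_one (h_pos _).ne', Finset.prod_mul_distrib]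
      _ ≤ n.1 0 * ∏ i, (n.1 i : ℝ) := by gcongr
      _ = n.1 0 * n.1 0 * ∏ i : Fin r, (n.1 i.succ : ℝ) := by rw [Fin.prod_univ_succ, mul_assoc]
      _ ≤ n.1 0 ^ q 0 * ∏ i : Fin r, (n.1 i.succ : ℝ) ^ q i.succ := by
        gcongr with i
        exact h_tail i
      _ = _ := (Fin.prod_univ_succ fun i => (n.1 i : ℝ) ^ q i).symm

lemma min_mul_le_sub (n : ParityChain r) (i : Fin r) : min 1 (1 - c) * n.1 i ≤ n.1 i - c := by
  have h_one := n.one_le_cast i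
  rcases le_total 0 c with hc | hc
  · rw [min_eq_right (by linarith)]
    nlinarith
  · rw [min_eq_left (by linarith)]
    linarith

lemma summable_term (hq : IsAdmissible q) (hc : c < 1) :
    Summable fun n : ParityChain r => n.term q c := by
  set κ : ℝ := min 1 (1 - c)
  have hκ : 0 < κ := lt_min one_pos (by linarith)
  rcases r.eq_zero_or_pos with rfl | hr
  · exact Summable.of_finite
  have h_rpow : Summable fun N : ℕ => ((N : ℝ) ^ (1 + 1 / r : ℝ))⁻¹ :=
    Real.summable_nat_rpow_inv.2 (by simpa using hr)
  have h_prod := (summable_prod_fin h_rpow (fun N => by positivity) r).subtype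
    {n | StrictAnti n ∧ (∀ i, 0 < n i) ∧ ∀ i, n i % 2 = (r - i.val) % 2}
  refine Summable.of_nonneg_of_le (fun n => n.term_nonneg q hc) (fun n => ?_)
    (h_prod.mul_left (∏ i, 2 / κ ^ q i))
  have h_pos (i) : 0 < (n.1 i : ℝ) := one_pos.trans_le (n.one_le_cast i)
  calc
    n.term q c ≤ ∏ i, 2 / (κ * n.1 i) ^ q i := by
      unfold term
      gcongr with i
      · exact fun i _ => div_nonneg zero_le_two (pow_nonneg (n.sub_pos hc i).le _)
      · exact pow_pos (mul_pos hκ (h_pos i)) _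
      · exact n.min_mul_le_sub i
    _ = (∏ i, 2 / κ ^ q i) * (∏ i, (n.1 i : ℝ) ^ q i)⁻¹ := by
      simp only [mul_pow, ← div_div, div_eq_mul_inv _ ((n.1 _ : ℝ) ^ _), Finset.prod_mul_distrib,
        Finset.prod_inv_distrib]
    _ ≤ (∏ i, 2 / κ ^ q i) * (∏ i, (n.1 i : ℝ) ^ (1 + 1 / r : ℝ))⁻¹ :=
      mul_le_mul_of_nonneg_left
        (inv_anti₀ (Finset.prod_pos fun i _ => Real.rpow_pos_of_pos (h_pos i) _)
          (n.prod_rpow_le_prod_pow hq)) (by positivity)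
    _ = _ := by simp only [Finset.prod_inv_distrib, Function.comp_apply]

lemma norm_term_le (n : ParityChain r) {z : ℂ} (hz : z.re ≤ c) (hc : c < 1) :
    ‖n.term q z‖ ≤ n.term q c := by
  rw [term, term, norm_prod]
  gcongr with i
  rw [norm_div, norm_pow, Complex.norm_two]
  have h_re : (n.1 i : ℝ) - c ≤ ((n.1 i : ℂ) - z).re := by
    rw [Complex.sub_re, Complex.natCast_re]
    linarith
  gcongr
  · exact pow_pos (n.sub_pos hc i) _
  · exact (n.sub_pos hc i).le
  · exact h_re.trans (Complex.re_le_norm _)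

lemma sub_ne_zero (n : ParityChain r) {z : ℂ} (hz : z.re < 1) (i : Fin r) : (n.1 i : ℂ) - z ≠ 0 :=
  fun h => (n.sub_pos hz i).ne' <| by simpa using congrArg Complex.re h

end ParityChain

lemma parityChainSum_one_lt_top {p : List ℕ} {c : ℝ} (hp : IsAdmissible p.get) (hc : c < 1) :
    parityChainSum p c 1 < ∞ := by
  simpa only [parityChainSum, Real.one_rpow, ENNReal.ofReal_one, one_mul] using
    (ParityChain.summable_term hp hc).tsum_ofReal_lt_top

end Summability

/-- The level-two Hurwitz sum `∑ ∏ 2 / (nᵢ - z) ^ qᵢ` over parity chains, which is `T(q; 1 - z)`. -/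
noncomputable def hurwitzT {r : ℕ} (q : Fin r → ℕ) (z : ℂ) : ℂ := ∑' n : ParityChain r, n.term q z

section HurwitzT

lemma antitone_add_val_of_strictAnti {r : ℕ} {m : Fin r → ℕ} (hm : StrictAnti m) :
    Antitone fun i => m i + i.val := by
  cases r with
  | zero => exact fun i => i.elim0
  | succ r =>
    refine Fin.antitone_iff_succ_le.2 fun i => ?_
    have := hm i.castSucc_lt_succ
    simp only [Fin.val_succ, Fin.val_castSucc]
    omega

lemma sub_val_le_of_strictAnti {r : ℕ} {m : Fin r → ℕ} (hm : StrictAnti m) (hpos : ∀ i, 0 < m i)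
    (i : Fin r) : r - i.val ≤ m i := by
  have hr : r - 1 < r := Nat.sub_lt i.pos one_pos
  have h_last := antitone_add_val_of_strictAnti hm
    (show i ≤ ⟨r - 1, hr⟩ from Nat.le_sub_one_of_lt i.2)
  have := hpos ⟨r - 1, hr⟩
  simp only at h_last
  omega

/-- The change of summation variables `nᵢ = 2 mᵢ - r + i` (with `i` counted from `0`) between the
two indexings of the multiple T-values. -/
def strictAntiEquivParityChain (r : ℕ) :
    {m : Fin r → ℕ // StrictAnti m ∧ ∀ i, 0 < m i} ≃ ParityChain r where
  toFun m := ⟨fun i => 2 * m.1 i - (r - i), by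
    refine ⟨fun i j hij => ?_, fun i => ?_, fun i => ?_⟩
    · have h_gap := antitone_add_val_of_strictAnti m.2.1 hij.le
      have h_lower := sub_val_le_of_strictAnti m.2.1 m.2.2 j
      have : i.val < j.val := hij
      simp only at h_gap ⊢
      omega
    all_goals
      have h_lower := sub_val_le_of_strictAnti m.2.1 m.2.2 i
      have h_pos := m.2.2 i
      beta_reduce
      omega⟩
  invFun n := ⟨fun i => (n.1 i + (r - i)) / 2, by
    refine ⟨fun i j hij => ?_, fun i => ?_⟩
    · have h_anti := n.2.1 hij
      have : i.val < j.val := hij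
      simp only
      omega
    · have h_pos := n.2.2.1 i
      beta_reduce
      omega⟩
  left_inv m := Subtype.ext <| funext fun i => by
    have h_lower := sub_val_le_of_strictAnti m.2.1 m.2.2 i
    simp only
    omega
  right_inv n := Subtype.ext <| funext fun i => by
    have h_parity := n.2.2.2 i
    simp only
    omega

lemma HMTV_eq_hurwitzT (l : List ℕ) (z : ℂ) : HMTV l (1 - z) = hurwitzT l.get z := by
  rw [HMTV, hurwitzT, ← (strictAntiEquivParityChain l.length).tsum_eq]
  refine tsum_congr fun m => ?_
  have h_factor (i : Fin l.length) :
      2 * (m.1 i : ℂ) - l.length - 1 + i.val + (1 - z) =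
        ((strictAntiEquivParityChain l.length m).1 i : ℂ) - z := by
    have h_lower := sub_val_le_of_strictAnti m.2.1 m.2.2 i
    change _ = ((2 * m.1 i - (l.length - i) : ℕ) : ℂ) - z
    rw [Nat.cast_sub (by omega), Nat.cast_sub i.2.le]
    push_cast
    ring
  simp only [h_factor, ParityChain.term, zpow_neg, zpow_natCast, div_eq_mul_inv,
    Finset.prod_mul_distrib, Finset.prod_const, Finset.card_univ, Fintype.card_fin]

lemma HMTV_ofFn {r : ℕ} (q : Fin r → ℕ) (z : ℂ) : HMTV (List.ofFn q) (1 - z) = hurwitzT q z :=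
  (HMTV_eq_hurwitzT _ z).trans <| congrArg (fun s : Σ n, Fin n → ℕ => hurwitzT s.2 z) <|
    List.equivSigmaTuple.apply_symm_apply ⟨r, q⟩

end HurwitzT

section IteratedDeriv

open Finset.HasAntidiagonal (antidiagonal mem_antidiagonal)

lemma sum_antidiagonalTuple_succ {M : Type*} [AddCommMonoid M] (r m : ℕ)
    (f : (Fin (r + 1) → ℕ) → M) :
    ∑ j ∈ Finset.Nat.antidiagonalTuple (r + 1) m, f j =
      ∑ p ∈ antidiagonal m, ∑ j ∈ Finset.Nat.antidiagonalTuple r p.2, f (Fin.cons p.1 j) := by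
  rw [Finset.sum_sigma']
  refine Finset.sum_bij' (fun j _ => ⟨(j 0, ∑ i, Fin.tail j i), Fin.tail j⟩)
    (fun x _ => Fin.cons x.1.1 x.2) ?_ ?_ ?_ ?_ ?_
  · simp [Finset.Nat.mem_antidiagonalTuple, Fin.sum_univ_succ, Fin.tail]
  · rintro ⟨⟨a, b⟩, j⟩
    simp +contextual [Finset.Nat.mem_antidiagonalTuple, Fin.sum_univ_succ]
  · simp
  · rintro ⟨⟨a, b⟩, j⟩
    simp +contextual [Finset.Nat.mem_antidiagonalTuple]
  · simp

variable {𝕜 : Type*} [NontriviallyNormedField 𝕜] {x : 𝕜}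

lemma iteratedDeriv_mul_eq_sum_antidiagonal [CharZero 𝕜] {f g : 𝕜 → 𝕜} {m : ℕ}
    (hf : ContDiffAt 𝕜 m f x) (hg : ContDiffAt 𝕜 m g x) :
    iteratedDeriv m (fun y => f y * g y) x = m.factorial * ∑ p ∈ antidiagonal m,
      iteratedDeriv p.1 f x / p.1.factorial * (iteratedDeriv p.2 g x / p.2.factorial) := by
  rw [iteratedDeriv_fun_mul hf hg, Finset.Nat.sum_antidiagonal_eq_sum_range_succ_mk, Finset.mul_sum]
  refine Finset.sum_congr rfl fun i hi => ?_
  rw [Nat.cast_choose 𝕜 (Finset.mem_range_succ_iff.1 hi), mul_assoc,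
    div_mul_div_comm, div_mul_eq_mul_div, mul_div_assoc]

lemma iteratedDeriv_prod_eq_sum_antidiagonalTuple [CharZero 𝕜] {r : ℕ} {f : Fin r → 𝕜 → 𝕜} (m : ℕ)
    (hf : ∀ i, ContDiffAt 𝕜 m (f i) x) :
    iteratedDeriv m (fun y => ∏ i, f i y) x = m.factorial *
      ∑ j ∈ Finset.Nat.antidiagonalTuple r m,
        ∏ i, iteratedDeriv (j i) (f i) x / (j i).factorial := by
  induction r generalizing m with
  | zero => cases m <;> simp [iteratedDeriv_succ']
  | succ r ih =>
    simp only [Fin.prod_univ_succ]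
    rw [iteratedDeriv_mul_eq_sum_antidiagonal (hf 0) (contDiffAt_prod fun i _ => hf i.succ),
      sum_antidiagonalTuple_succ]
    congr 1
    refine Finset.sum_congr rfl fun p hp => ?_
    have h_le : (p.2 : WithTop ℕ∞) ≤ m := mod_cast mem_antidiagonal.1 hp ▸ Nat.le_add_left p.2 p.1
    rw [ih p.2 fun i => (hf i.succ).of_le h_le,
      mul_div_cancel_left₀ _ (Nat.cast_ne_zero.2 p.2.factorial_ne_zero), Finset.mul_sum]
    simp only [Fin.cons_zero, Fin.cons_succ]

lemma iteratedDeriv_div_sub_pow (c a : 𝕜) (p j : ℕ) :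
    iteratedDeriv j (fun y => c / (a - y) ^ p) x =
      j.factorial * ((p + j - 1).choose j * (c / (a - x) ^ (p + j))) := by
  have h_zpow : (fun y : 𝕜 => c / (a - y) ^ p) = fun y => c * (a - y) ^ (-p : ℤ) := by
    simp only [zpow_neg, zpow_natCast, div_eq_mul_inv]
  have h_coeff : (-1 : 𝕜) ^ j * ∏ i ∈ Finset.range j, (((-p : ℤ) : 𝕜) - i) =
      j.factorial * (p + j - 1).choose j := by
    rw [← Nat.cast_mul, ← Nat.ascFactorial_eq_factorial_mul_choose', Nat.ascFactorial_eq_prod_range,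
      ← Finset.card_range j, ← Finset.prod_const, Finset.card_range, ← Finset.prod_mul_distrib]
    push_cast
    exact Finset.prod_congr rfl fun i _ => by ring
  rw [h_zpow, iteratedDeriv_const_mul_field,
    iteratedDeriv_comp_const_sub j (fun y : 𝕜 => y ^ (-p : ℤ)) a, iteratedDeriv_eq_iterate,
    iter_deriv_zpow']
  beta_reduce
  rw [smul_eq_mul, ← mul_assoc _ _ ((a - x) ^ _), h_coeff,
    show (-p - j : ℤ) = -(p + j : ℕ) by push_cast; ring, zpow_neg, zpow_natCast]
  ring

end IteratedDeriv

section IteratedDerivTsum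

variable {ι : Type*} {U : Set ℂ} {F : ι → ℂ → ℂ} {f : ℂ → ℂ}

lemma tendstoLocallyUniformlyOn_iteratedDeriv {l : Filter ι}
    (h : TendstoLocallyUniformlyOn F f l U)
    (hF : ∀ i, DifferentiableOn ℂ (F i) U) (hU : IsOpen U) (m : ℕ) :
    TendstoLocallyUniformlyOn (fun i => iteratedDeriv m (F i)) (iteratedDeriv m f) l U := by
  induction m generalizing F f with
  | zero => simpa only [iteratedDeriv_zero] using h
  | succ m ih =>
    simp only [iteratedDeriv_succ']
    exact ih (h.deriv (.of_forall hF) hU) fun i => (hF i).deriv hU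

lemma hasSum_iteratedDeriv_of_summable_norm {u : ι → ℝ} (hu : Summable u)
    (hF : ∀ i, DifferentiableOn ℂ (F i) U) (hU : IsOpen U) (h_le : ∀ i, ∀ w ∈ U, ‖F i w‖ ≤ u i)
    (m : ℕ) {z : ℂ} (hz : z ∈ U) :
    HasSum (fun i => iteratedDeriv m (F i) z) (iteratedDeriv m (fun w => ∑' i, F i w) z) := by
  have h_partial (s : Finset ι) : DifferentiableOn ℂ (fun w => ∑ i ∈ s, F i w) U :=
    .fun_sum fun i _ => hF i
  refine ((tendstoLocallyUniformlyOn_iteratedDeriv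
    (tendstoUniformlyOn_tsum hu h_le).tendstoLocallyUniformlyOn h_partial hU m).tendsto_at hz).congr
    fun s => ?_
  exact iteratedDeriv_fun_sum fun i _ => ((hF i).contDiffOn hU).contDiffAt (hU.mem_nhds hz)

end IteratedDerivTsum

section HurwitzTDeriv

variable {r : ℕ} {q : Fin r → ℕ} {z : ℂ}

namespace ParityChain

lemma contDiffAt_factor (n : ParityChain r) (hz : z.re < 1) (i : Fin r) {m : WithTop ℕ∞} :
    ContDiffAt ℂ m (fun w => 2 / ((n.1 i : ℂ) - w) ^ q i) z :=
  contDiffAt_const.div ((contDiffAt_const.sub contDiffAt_id).pow _)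
    (pow_ne_zero _ (n.sub_ne_zero hz i))

lemma differentiableAt_term (n : ParityChain r) (hz : z.re < 1) :
    DifferentiableAt ℂ (n.term q) z :=
  (contDiffAt_prod fun i _ => n.contDiffAt_factor hz i).differentiableAt one_ne_zero

lemma iteratedDeriv_term (n : ParityChain r) (m : ℕ) (hz : z.re < 1) :
    iteratedDeriv m (n.term q) z = m.factorial * ∑ j ∈ Finset.Nat.antidiagonalTuple r m,
      ((∏ i, (q i + j i - 1).choose (j i) : ℕ) : ℂ) * n.term (q + j) z := by
  unfold term
  rw [iteratedDeriv_prod_eq_sum_antidiagonalTuple m fun i => n.contDiffAt_factor hz i]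
  have h_ne (a : ℕ) : (a.factorial : ℂ) ≠ 0 := Nat.cast_ne_zero.2 a.factorial_ne_zero
  simp only [iteratedDeriv_div_sub_pow, mul_div_cancel_left₀ _ (h_ne _), Finset.prod_mul_distrib,
    Nat.cast_prod, Pi.add_apply]

end ParityChain

lemma isOpen_re_lt (c : ℝ) : IsOpen {z : ℂ | z.re < c} :=
  isOpen_lt Complex.continuous_re continuous_const

lemma hasSum_iteratedDeriv_term (hq : IsAdmissible q) (m : ℕ) (hz : z.re < 1) :
    HasSum (fun n : ParityChain r => iteratedDeriv m (n.term q) z)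
      (iteratedDeriv m (hurwitzT q) z) := by
  obtain ⟨c, hzc, hc⟩ := exists_between hz
  exact hasSum_iteratedDeriv_of_summable_norm (U := {w | w.re < c})
    (ParityChain.summable_term hq hc)
    (fun n w hw => (n.differentiableAt_term (hw.trans hc)).differentiableWithinAt) (isOpen_re_lt c)
    (fun n w hw => n.norm_term_le hw.le hc) m hzc

lemma hasSum_hurwitzT (hq : IsAdmissible q) (hz : z.re < 1) :
    HasSum (fun n : ParityChain r => n.term q z) (hurwitzT q z) := by
  simpa only [iteratedDeriv_zero] using hasSum_iteratedDeriv_term hq 0 hz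

lemma analyticOnNhd_hurwitzT (hq : IsAdmissible q) :
    AnalyticOnNhd ℂ (hurwitzT q) {z | z.re < 1} := by
  refine DifferentiableOn.analyticOnNhd (fun z hz => ?_) (isOpen_re_lt 1)
  obtain ⟨c, hzc, hc⟩ := exists_between (show z.re < 1 from hz)
  refine (Complex.differentiableOn_tsum_of_summable_norm (ParityChain.summable_term hq hc)
    (fun n w hw => ?_) (isOpen_re_lt c) fun n w hw => n.norm_term_le (le_of_lt hw) hc)
    |>.differentiableAt ((isOpen_re_lt c).mem_nhds hzc) |>.differentiableWithinAt
  exact (n.differentiableAt_term (lt_trans hw hc)).differentiableWithinAt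

lemma iteratedDeriv_hurwitzT (hq : IsAdmissible q) (m : ℕ) (hz : z.re < 1) :
    iteratedDeriv m (hurwitzT q) z = m.factorial * ∑ j ∈ Finset.Nat.antidiagonalTuple r m,
      ((∏ i, (q i + j i - 1).choose (j i) : ℕ) : ℂ) * hurwitzT (q + j) z := by
  refine (hasSum_iteratedDeriv_term hq m hz).unique ?_
  simp only [ParityChain.iteratedDeriv_term _ m hz]
  exact (hasSum_sum fun j _ => (hasSum_hurwitzT (hq.add j) hz).mul_left _).mul_left _

end HurwitzTDeriv

section PolylogMeasure

open ProbabilityTheory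

/-- The density `A(k; x) / x`, with values in `[0, ∞]`. -/
noncomputable def polylogDensity (k : List ℕ) (x : ℝ) : ℝ≥0∞ :=
  levelTwoForm false x * levelTwoPolylog k x

/-- The measure `A(k; x) dx / x` on the unit interval. -/
noncomputable def polylogMeasure (k : List ℕ) : Measure ℝ :=
  (volume.restrict (Ioo 0 1)).withDensity (polylogDensity k)

/-- The random variable `log ((1 + x) / (1 - x))`, whose moments against `polylogMeasure` are the
integrals of powers of logarithms in the theorem. -/
noncomputable def negLogCayley (x : ℝ) : ℝ := -Real.log (cayley x)

@[fun_prop]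
lemma measurable_negLogCayley : Measurable negLogCayley := measurable_cayley.log.neg

variable {k : List ℕ}

lemma measurable_polylogDensity : Measurable (polylogDensity k) :=
  measurable_levelTwoForm.mul measurable_levelTwoPolylog

lemma exp_mul_negLogCayley {x : ℝ} (hx : x ∈ Ioo (0 : ℝ) 1) (a : ℝ) :
    Real.exp (a * negLogCayley x) = cayley x ^ (-a) := by
  rw [Real.rpow_def_of_pos (cayley_pos hx), negLogCayley, mul_neg, mul_neg, mul_comm]

lemma lintegral_exp_negLogCayley {a : ℝ} (ha : a < 1) :
    ∫⁻ x, .ofReal (Real.exp (a * negLogCayley x)) ∂polylogMeasure k =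
      parityChainSum (plusOne (HDual k.reverse)) a 1 := by
  rw [polylogMeasure, lintegral_withDensity_eq_lintegral_mul _ measurable_polylogDensity
    (by fun_prop), ← lintegral_levelTwoPolylog_mul_cayley_rpow ha]
  refine setLIntegral_congr_fun measurableSet_Ioo fun x hx => ?_
  rw [Pi.mul_apply, polylogDensity, exp_mul_negLogCayley hx, mul_assoc]

lemma mem_interior_integrableExpSet_negLogCayley {a : ℝ} (ha : a < 1) :
    a ∈ interior (integrableExpSet negLogCayley (polylogMeasure k)) := by
  refine interior_mono (s := Iio 1) (t := integrableExpSet negLogCayley (polylogMeasure k))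
    (fun c hc => ⟨by fun_prop, ?_⟩) (by simpa using ha)
  rw [hasFiniteIntegral_iff_ofReal (.of_forall fun x => (Real.exp_pos _).le),
    lintegral_exp_negLogCayley hc]
  exact parityChainSum_one_lt_top isAdmissible_plusOne_HDual hc

lemma toReal_parityChainSum_one {p : List ℕ} {a : ℝ} (ha : a < 1) :
    ((parityChainSum p a 1).toReal : ℂ) = hurwitzT p.get a := by
  simp only [parityChainSum, Real.one_rpow, ENNReal.ofReal_one, one_mul, hurwitzT]
  rw [ENNReal.tsum_toReal_eq fun n => ENNReal.ofReal_ne_top, Complex.ofReal_tsum]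
  refine tsum_congr fun n => ?_
  rw [ENNReal.toReal_ofReal (n.term_nonneg _ ha)]
  simp [ParityChain.term]

lemma complexMGF_polylogMeasure_ofReal {a : ℝ} (ha : a < 1) :
    complexMGF negLogCayley (polylogMeasure k) a = hurwitzT (plusOne (HDual k.reverse)).get a := by
  rw [complexMGF_ofReal, mgf, integral_eq_lintegral_of_nonneg_ae
    (.of_forall fun x => (Real.exp_pos _).le) (by fun_prop), lintegral_exp_negLogCayley ha,
    toReal_parityChainSum_one ha]

lemma frequently_nhdsNE_of_eventually_ofReal {p : ℂ → Prop} {a : ℝ}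
    (hp : ∀ᶠ t : ℝ in 𝓝 a, p t) : ∃ᶠ z in 𝓝[≠] (a : ℂ), p z := by
  have h_tendsto : Tendsto ((↑) : ℝ → ℂ) (𝓝[≠] a) (𝓝[≠] a) :=
    tendsto_nhdsWithin_iff.2 ⟨Complex.continuous_ofReal.continuousAt.mono_left inf_le_left,
      eventually_mem_nhdsWithin.mono fun t ht => Complex.ofReal_injective.ne ht⟩
  exact h_tendsto.frequently (hp.filter_mono nhdsWithin_le_nhds).frequently

lemma complexMGF_polylogMeasure :
    EqOn (complexMGF negLogCayley (polylogMeasure k))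
      (hurwitzT (plusOne (HDual k.reverse)).get) {z | z.re < 1} := by
  have h_mgf : AnalyticOnNhd ℂ (complexMGF negLogCayley (polylogMeasure k)) {z | z.re < 1} :=
    analyticOnNhd_complexMGF.mono fun z hz => mem_interior_integrableExpSet_negLogCayley hz
  exact h_mgf.eqOn_of_preconnected_of_frequently_eq
    (analyticOnNhd_hurwitzT isAdmissible_plusOne_HDual) (convex_halfSpace_re_lt 1).isPreconnected
    (z₀ := ((0 : ℝ) : ℂ)) (by simp)
    (frequently_nhdsNE_of_eventually_ofReal <|
      (eventually_lt_nhds one_pos).mono fun _ => complexMGF_polylogMeasure_ofReal)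

lemma exp_mul_ofReal_negLogCayley {x : ℝ} (hx : x ∈ Ioo (0 : ℝ) 1) (z : ℂ) :
    Complex.exp (z * negLogCayley x) = ((cayley x : ℂ) ^ z)⁻¹ := by
  have h_pos := cayley_pos hx
  rw [Complex.cpow_def_of_ne_zero (Complex.ofReal_ne_zero.2 h_pos.ne'), ← Complex.exp_neg,
    negLogCayley, Complex.ofReal_neg, Complex.ofReal_log h_pos.le, mul_neg, mul_comm]

lemma toReal_polylogDensity (hk : k ≠ []) (hpos : ∀ a ∈ k, 0 < a) {x : ℝ}
    (hx : x ∈ Ioo (0 : ℝ) 1) :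
    (polylogDensity k x).toReal = AFn k x / x := by
  rw [polylogDensity, ENNReal.toReal_mul,
    toReal_levelTwoPolylog hk hpos (Ioo_subset_Ioc_self hx), levelTwoForm,
    ENNReal.toReal_ofReal (one_div_nonneg.2 hx.1.le), one_div_mul_eq_div]

lemma ae_polylogDensity_lt_top : ∀ᵐ x ∂volume.restrict (Ioo 0 1), polylogDensity k x < ∞ := by
  refine ae_lt_top measurable_polylogDensity (ne_of_lt ?_)
  have h_mass := lintegral_levelTwoPolylog_mul_cayley_rpow (k := k) zero_lt_one
  simp only [neg_zero, Real.rpow_zero, ENNReal.ofReal_one, mul_one] at h_mass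
  exact h_mass ▸ parityChainSum_one_lt_top isAdmissible_plusOne_HDual zero_lt_one

lemma integral_AFn_mul_log_pow_div (hk : k ≠ []) (hpos : ∀ a ∈ k, 0 < a) (m : ℕ) {z : ℂ}
    (hz : z.re < 1) :
    (∫ x in (0 : ℝ)..1, ((AFn k x * Real.log (cayley x) ^ m : ℝ) : ℂ) / (x * (cayley x : ℂ) ^ z)) =
      (-1) ^ m * iteratedDeriv m (complexMGF negLogCayley (polylogMeasure k)) z := by
  rw [iteratedDeriv_complexMGF (mem_interior_integrableExpSet_negLogCayley hz),
    intervalIntegral.integral_of_le zero_le_one, integral_Ioc_eq_integral_Ioo, polylogMeasure,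
    integral_withDensity_eq_integral_toReal_smul measurable_polylogDensity ae_polylogDensity_lt_top,
    ← integral_const_mul]
  refine setIntegral_congr_fun measurableSet_Ioo fun x hx => ?_
  have h_log : (-1 : ℂ) ^ m * (negLogCayley x : ℂ) ^ m = (Real.log (cayley x) : ℂ) ^ m := by
    rw [← mul_pow, negLogCayley, Complex.ofReal_neg, neg_one_mul, neg_neg]
  rw [toReal_polylogDensity hk hpos hx, exp_mul_ofReal_negLogCayley hx, Complex.real_smul,
    mul_left_comm, ← mul_assoc _ _ (_)⁻¹, h_log]
  push_cast
  simp only [div_eq_mul_inv, mul_inv]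
  ring

end PolylogMeasure

theorem stmt1 (k : List ℕ) (hk : k ≠ []) (hkpos : ∀ a ∈ k, 0 < a)
    (m : ℕ) (hm : 0 < m) (α : ℂ) (hα : ∀ j : ℕ, 0 < j → α ≠ (j : ℂ)) (hre : α.re < 1) :
    (∫ x in (0:ℝ)..1,
        ((AFn k x * Real.log ((1 - x) / (1 + x)) ^ m : ℝ) : ℂ) /
          ((x : ℂ) * (((1 - x) / (1 + x) : ℝ) : ℂ) ^ α)) =
      (-1) ^ m * (Nat.factorial m : ℂ) *
        ∑ j ∈ Finset.Nat.antidiagonalTuple (k.sum + 1 - k.length) m,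
          ((∏ i : Fin (k.sum + 1 - k.length), Nat.choose
              ((plusOne (HDual k.reverse)).getD (i : ℕ) 0 + j i - 1) (j i) : ℕ) : ℂ) *
            HMTV (List.ofFn fun i : Fin (k.sum + 1 - k.length) =>
              (plusOne (HDual k.reverse)).getD (i : ℕ) 0 + j i) (1 - α) := by
  have h_mgf := complexMGF_polylogMeasure (k := k).eventuallyEq_of_mem
    ((isOpen_re_lt 1).mem_nhds hre)
  refine (integral_AFn_mul_log_pow_div hk hkpos m hre).trans ?_
  rw [h_mgf.iteratedDeriv_eq m, iteratedDeriv_hurwitzT isAdmissible_plusOne_HDual m hre,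
    ← mul_assoc, ← length_plusOne_HDual_reverse hk hkpos]
  simp only [List.getD_eq_get, HMTV_ofFn]
  rfl
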